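/- arXiv:2009.07073 — 11 statements merged into one kernel-verified Lean document; each statement's English description precedes it below -/
import Mathlib

section
/- Let G be a finite simple graph and B a set of vertices of G with forcing processes F and F'. Then for any set B' obtained from B using F, the set of forces (F \ F(B')) ∪ F'(B') is a forcing process of B in G, where for S ⊆ V(G), F(S) = {x→y ∈ F : y ∉ S}. -/
/-!
Zero forcing with leaks (vertex leaks, edge leaks, specified leaks, mixed leaks).

A force `u → v` is modelled as the ordered pair `(u, v) : V × V`.  All the
leak notions are encoded by a set `P` of *prohibited* forces.
-/

variable {V : Type*}

/-- With blue set `S` and prohibited set of forces `P`, vertex `u` can force `v`: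
`u` is blue, `v` is a white neighbor of `u`, every other neighbor of `u` is blue,
and the force `u → v` is not prohibited. -/
def CanForce (G : SimpleGraph V) (P : Set (V × V)) (S : Set V) (u v : V) : Prop :=
  u ∈ S ∧ v ∉ S ∧ G.Adj u v ∧ (∀ w, G.Adj u w → w ≠ v → w ∈ S) ∧ (u, v) ∉ P

/-- `Forced G P B v` means vertex `v` is eventually colored blue when the zero
forcing color change rule (avoiding the prohibited forces `P`) is applied
exhaustively starting from the blue set `B`. -/
inductive Forced (G : SimpleGraph V) (P : Set (V × V)) (B : Set V) : V → Prop
  | init : ∀ {v : V}, v ∈ B → Forced G P B v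
  | force : ∀ {u v : V}, G.Adj u v → (u, v) ∉ P → Forced G P B u →
      (∀ w, G.Adj u w → w ≠ v → Forced G P B w) → Forced G P B v

/-- `B^[∞]_P`, the set of blue vertices after exhaustively applying the zero
forcing rule with prohibited forces `P`, starting from `B`. -/
def closureSet (G : SimpleGraph V) (P : Set (V × V)) (B : Set V) : Set V :=
  {v | Forced G P B v}

/-- The prohibited forces corresponding to a set `L` of vertex leaks: a vertex
leak may not perform any force. -/
def vertexLeaks (L : Set V) : Set (V × V) := {p | p.1 ∈ L}

/-- The prohibited forces corresponding to a set `L` of edge leaks: no force may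
pass across an edge leak in either direction. -/
def edgeLeaksP (L : Set (Sym2 V)) : Set (V × V) := {p | s(p.1, p.2) ∈ L}

/-- `B` is an `ℓ`-leaky forcing set of `G`: despite any set of (at most) `ℓ`
vertex leaks, exhaustive forcing colors all of `V(G)` blue. -/
def IsLeakyForcingSet (G : SimpleGraph V) (ℓ : ℕ) (B : Set V) : Prop :=
  ∀ L : Finset V, L.card ≤ ℓ → closureSet G (vertexLeaks ↑L) B = Set.univ

/-- `B` is an `ℓ`-edge-leaky forcing set of `G`: despite any set of (at most)
`ℓ` edge leaks, exhaustive forcing colors all of `V(G)` blue. -/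
def IsEdgeLeakyForcingSet (G : SimpleGraph V) (ℓ : ℕ) (B : Set V) : Prop :=
  ∀ L : Finset (Sym2 V), ↑L ⊆ G.edgeSet → L.card ≤ ℓ →
    closureSet G (edgeLeaksP ↑L) B = Set.univ

/-- `B` is a specified `ℓ`-leaky forcing set of `G`: despite any set of (at
most) `ℓ` specified leaks (prohibited forces between adjacent vertices),
exhaustive forcing colors all of `V(G)` blue. -/
def IsSpecifiedLeakyForcingSet (G : SimpleGraph V) (ℓ : ℕ) (B : Set V) : Prop :=
  ∀ L : Finset (V × V), (∀ p ∈ L, G.Adj p.1 p.2) → L.card ≤ ℓ →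
    closureSet G (↑L) B = Set.univ

/-- `B` is a mixed `ℓ`-leaky forcing set of `G`: despite any set of (at most)
`ℓ` leaks, each a vertex leak, an edge leak, or a specified leak, exhaustive
forcing colors all of `V(G)` blue. -/
def IsMixedLeakyForcingSet (G : SimpleGraph V) (ℓ : ℕ) (B : Set V) : Prop :=
  ∀ (L₁ : Finset V) (L₂ : Finset (Sym2 V)) (L₃ : Finset (V × V)),
    ↑L₂ ⊆ G.edgeSet → (∀ p ∈ L₃, G.Adj p.1 p.2) →
    L₁.card + L₂.card + L₃.card ≤ ℓ →
    closureSet G (vertexLeaks ↑L₁ ∪ edgeLeaksP ↑L₂ ∪ (↑L₃ : Set (V × V))) B = Set.univ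

/-- A chronologically valid list of forces starting from a blue set. -/
def ValidList (G : SimpleGraph V) (P : Set (V × V)) : Set V → List (V × V) → Prop
  | _, [] => True
  | S, f :: l => CanForce G P S f.1 f.2 ∧ ValidList G P (insert f.2 S) l

/-- `F` is a forcing process (set of forces) of `B` in `G` with prohibited
forces `P`: the forces of `F` admit a chronological ordering in which each force
is valid and after applying all of them the whole graph is blue. -/
def IsForcingProcess (G : SimpleGraph V) (P : Set (V × V)) (B : Set V)
    (F : Set (V × V)) : Prop :=
  ∃ l : List (V × V), {f | f ∈ l} = F ∧ ValidList G P B l ∧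
    B ∪ Prod.snd '' F = Set.univ

/-- `B'` is obtained from `B` using `F`: `B` can color exactly `B'` blue using
only a subset of the forces in `F`, applied in a chronologically valid order. -/
def ObtainedUsing (G : SimpleGraph V) (P : Set (V × V)) (B : Set V) (F : Set (V × V))
    (B' : Set V) : Prop :=
  ∃ l : List (V × V), (∀ f ∈ l, f ∈ F) ∧ ValidList G P B l ∧
    B' = B ∪ Prod.snd '' {f | f ∈ l}

/-- `ℱ_P(B)`: the set of forces that belong to some forcing process of `B`
(with prohibited forces `P`). -/
def potentialForces (G : SimpleGraph V) (P : Set (V × V)) (B : Set V) : Set (V × V) :=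
  {f | ∃ F, IsForcingProcess G P B F ∧ f ∈ F}

/-- `Z_(ℓ)(G)`, the `ℓ`-leaky forcing number of `G`. -/
noncomputable def Zleaky (G : SimpleGraph V) (ℓ : ℕ) : ℕ :=
  sInf {n | ∃ B : Finset V, B.card = n ∧ IsLeakyForcingSet G ℓ ↑B}

/-- `Z'_(ℓ)(G)`, the `ℓ`-edge-leaky forcing number of `G`. -/
noncomputable def ZedgeLeaky (G : SimpleGraph V) (ℓ : ℕ) : ℕ :=
  sInf {n | ∃ B : Finset V, B.card = n ∧ IsEdgeLeakyForcingSet G ℓ ↑B}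

/-- `Z^s_(ℓ)(G)`, the specified `ℓ`-leaky forcing number of `G`. -/
noncomputable def Zspec (G : SimpleGraph V) (ℓ : ℕ) : ℕ :=
  sInf {n | ∃ B : Finset V, B.card = n ∧ IsSpecifiedLeakyForcingSet G ℓ ↑B}

/-- `Z^m_(ℓ)(G)`, the mixed `ℓ`-leaky forcing number of `G`. -/
noncomputable def Zmixed (G : SimpleGraph V) (ℓ : ℕ) : ℕ :=
  sInf {n | ∃ B : Finset V, B.card = n ∧ IsMixedLeakyForcingSet G ℓ ↑B}

/-- Two sets of specified leaks on `V(G)` are isomorphic if some bijection of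
the vertex set matches them up. -/
def LeaksIso (L₁ L₂ : Set (V × V)) : Prop :=
  ∃ φ : V ≃ V, ∀ x y : V, (x, y) ∈ L₁ ↔ (φ x, φ y) ∈ L₂

/-- `B` is an `L`-leaky forcing set of `G`: `B` colors all of `V(G)` blue
despite any set of specified leaks isomorphic to a subset of `L`. -/
def IsLLeakyForcingSet (G : SimpleGraph V) (L : Set (V × V)) (B : Set V) : Prop :=
  ∀ L' : Set (V × V), (∃ L₂ ⊆ L, LeaksIso L' L₂) → closureSet G L' B = Set.univ

/-- `L` is a set of independent leaks: `|T(L)| = |L|` and `T(L) ∩ H(L) = ∅`. -/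
def IsIndependentLeaks [DecidableEq V] (L : Finset (V × V)) : Prop :=
  (L.image Prod.fst).card = L.card ∧ Disjoint (L.image Prod.fst) (L.image Prod.snd)

/-- `I(L)`: the size of a largest set of independent leaks contained in `L`. -/
noncomputable def maxIndepLeaks [DecidableEq V] (L : Finset (V × V)) : ℕ :=
  sSup {n | ∃ M ⊆ L, IsIndependentLeaks M ∧ M.card = n}

/-- `Z_L(G)`, the `L`-leaky forcing number of `G`. -/
noncomputable def ZLleaky (G : SimpleGraph V) (L : Set (V × V)) : ℕ :=
  sInf {n | ∃ B : Finset V, B.card = n ∧ IsLLeakyForcingSet G L ↑B}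


theorem validList_head_notMem {G : SimpleGraph V} {P : Set (V × V)} (l : List (V × V)) :
    ∀ S : Set V, ValidList G P S l → ∀ f ∈ l, f.2 ∉ S := by
  induction l with
  | nil => intro S _ f hf; simp at hf
  | cons a l ih =>
    intro S h f hf
    rcases List.mem_cons.1 hf with rfl | hf
    · exact h.1.2.1
    · exact fun hS => ih _ h.2 f hf (Set.mem_insert_of_mem _ hS)

theorem validList_head_unique {G : SimpleGraph V} {P : Set (V × V)} (l : List (V × V)) :
    ∀ S : Set V, ValidList G P S l → ∀ f ∈ l, ∀ g ∈ l, f.2 = g.2 → f = g := by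
  induction l with
  | nil => intro S _ f hf; simp at hf
  | cons a l ih =>
    intro S h f hf g hg hfg
    have key := validList_head_notMem l _ h.2
    rcases List.mem_cons.1 hf with rfl | hf2
    · rcases List.mem_cons.1 hg with rfl | hg
      · rfl
      · exact absurd (by rw [hfg]; exact Set.mem_insert _ _) (key g hg)
    · rcases List.mem_cons.1 hg with rfl | hg
      · exact absurd (by rw [hfg]; exact Set.mem_insert _ _) (key f hf2)
      · exact ih _ h.2 f hf2 g hg hfg

theorem validList_append {G : SimpleGraph V} {P : Set (V × V)} (l m : List (V × V)) :
    ∀ S : Set V, ValidList G P S l → ValidList G P (S ∪ Prod.snd '' {f | f ∈ l}) m →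
      ValidList G P S (l ++ m) := by
  induction l with
  | nil => intro S _ h; simpa using h
  | cons a l ih =>
    intro S h hm
    refine ⟨h.1, ih _ h.2 ?_⟩
    convert hm using 1
    ext x
    simp only [Set.mem_union, Set.mem_insert_iff, Set.mem_image, Set.mem_ofPred_eq, List.mem_cons]
    grind

open Classical in
theorem validList_filter {G : SimpleGraph V} {P : Set (V × V)} (T : Set V)
    (l : List (V × V)) : ∀ S : Set V, ValidList G P S l →
      ValidList G P (S ∪ T) (l.filter (fun f => f.2 ∉ T)) := by
  induction l with
  | nil => intro S _; trivial
  | cons a l ih =>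
    intro S h
    have h2 := ih _ h.2
    rw [Set.insert_union] at h2
    by_cases ha : a.2 ∈ T
    · rw [Set.insert_eq_of_mem (Set.mem_union_right S ha)] at h2
      simpa [List.filter_cons, ha] using h2
    · obtain ⟨⟨h1, h3, h4, h5, h6⟩, _⟩ := h
      rw [List.filter_cons_of_pos (by simpa using ha)]
      exact ⟨⟨Or.inl h1, fun hx => hx.elim h3 ha, h4,
        fun w hw hne => Or.inl (h5 w hw hne), h6⟩, h2⟩

/-- Lemma `switch`: if `F` and `F'` are forcing processes of
`B` in `G` and `B'` is obtained from `B` using `F`, then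
`(F \ F(B')) ∪ F'(B')` is a forcing process of `B`, where
`F(S) = {x→y ∈ F : y ∉ S}`. -/
theorem statement0 [Fintype V] [DecidableEq V] (G : SimpleGraph V)
    (B B' : Set V) (F F' : Set (V × V))
    (hF : IsForcingProcess G ∅ B F) (hF' : IsForcingProcess G ∅ B F')
    (hB' : ObtainedUsing G ∅ B F B') :
    IsForcingProcess G ∅ B
      ((F \ {f ∈ F | f.2 ∉ B'}) ∪ {f ∈ F' | f.2 ∉ B'}) := by
  classical
  obtain ⟨l, rfl, hl, hc⟩ := hF
  obtain ⟨l', rfl, hl', hc'⟩ := hF'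
  obtain ⟨m, hm, hmv, hB⟩ := hB'
  have hBB : B ∪ B' = B' := by
    rw [hB, ← Set.union_assoc, Set.union_self]
  have hmB : ∀ f, f ∈ m ↔ f ∈ l ∧ f.2 ∈ B' := by
    intro f
    constructor
    · intro hf
      exact ⟨hm f hf, by rw [hB]; exact Or.inr ⟨f, hf, rfl⟩⟩
    · rintro ⟨hf, hfB⟩
      rw [hB] at hfB
      rcases hfB with hfB | ⟨g, hg, hgf⟩
      · exact absurd hfB (validList_head_notMem l B hl f hf)
      · rw [← validList_head_unique l B hl g (hm g hg) f hf hgf]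
        exact hg
  refine ⟨m ++ l'.filter (fun f => f.2 ∉ B'), ?_, ?_, ?_⟩
  · ext f
    have := hmB f
    simp only [Set.mem_ofPred_eq, List.mem_append, List.mem_filter, decide_eq_true_eq,
      Set.mem_union, Set.mem_sdiff]
    tauto
  · refine validList_append _ _ _ hmv ?_
    rw [← hB]
    have := validList_filter B' l' B hl'
    rwa [hBB] at this
  · refine Set.eq_univ_of_forall fun x => ?_
    by_cases hx : x ∈ B'
    · have hx' := hx
      rw [hB] at hx'
      rcases hx' with h | ⟨g, hg, rfl⟩
      · exact Or.inl h
      · exact Or.inr ⟨g, Or.inl ⟨hm g hg, fun h => h.2 hx⟩, rfl⟩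
    · have hx' : x ∈ B ∪ Prod.snd '' {f | f ∈ l'} := by rw [hc']; trivial
      rcases hx' with h | ⟨g, hg, rfl⟩
      · exact Or.inl h
      · exact Or.inr ⟨g, Or.inr ⟨hg, hx⟩, rfl⟩
end

section
/- Let G be a finite simple graph, ℓ ≥ 1, and let B be an (ℓ−1)-leaky forcing set of G. If L is a set of k ≥ ℓ vertex leaks, then |L \ B^[∞]_L| ≤ k − ℓ; that is, at most k − ℓ of the leaks remain white after exhaustively applying the zero forcing rule with leaks L starting from B. -/
/-!
Zero forcing with leaks (vertex leaks, edge leaks, specified leaks, mixed leaks).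

A force `u → v` is modelled as the ordered pair `(u, v) : V × V`.  All the
leak notions are encoded by a set `P` of *prohibited* forces.
-/

variable {V : Type*}

/-- Lemma `fail`: if `B` is an `(ℓ-1)`-leaky forcing set and
`L` is a set of `k ≥ ℓ` vertex leaks, then `|L \ B^[∞]_L| ≤ k - ℓ`. -/
theorem statement1 [Fintype V] [DecidableEq V] (G : SimpleGraph V) (ℓ k : ℕ)
    (hℓ : 1 ≤ ℓ) (B : Set V) (hB : IsLeakyForcingSet G (ℓ - 1) B)
    (L : Finset V) (hcard : L.card = k) (hk : ℓ ≤ k) :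
    ((L : Set V) \ closureSet G (vertexLeaks ↑L) B).ncard ≤ k - ℓ := by
  by_contra hcon
  push Not at hcon
  classical
  set C := closureSet G (vertexLeaks (L : Set V)) B with hC
  have hsub : (L.filter (fun x => x ∈ C)).card ≤ ℓ - 1 := by
    have h1 : ((L : Set V) \ C) = ((L.filter (fun x => ¬ x ∈ C) : Finset V) : Set V) := by
      ext x; simp
    rw [h1, Set.ncard_coe_finset] at hcon
    have h2 := Finset.card_filter_add_card_filter_not (s := L) (fun x => x ∈ C)
    omega
  have huniv := hB _ hsub
  have key : ∀ v, Forced G (vertexLeaks ((L.filter (fun x => x ∈ C) : Finset V) : Set V)) B v →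
      v ∈ C := by
    intro v hv
    induction hv with
    | init h => exact Forced.init h
    | @force u v hadj hP _ _ ihu ihw =>
      refine Forced.force hadj ?_ ihu ihw
      intro hu
      apply hP
      have hu' : u ∈ L := hu
      change u ∈ ((L.filter (fun x => x ∈ C) : Finset V) : Set V)
      simp [hu', ihu]
  have hall : (L : Set V) \ C = ∅ := by
    ext x
    simp only [Set.mem_diff, Set.mem_empty_iff_false, iff_false, not_and, not_not]
    intro _
    apply key
    have : x ∈ closureSet G (vertexLeaks ((L.filter (fun x => x ∈ C) : Finset V) : Set V)) B := by
      rw [huniv]; trivial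
    exact this
  rw [hall] at hcon
  simp at hcon
end

section
/- Let G be a finite simple graph and ℓ ≥ 1. A set B ⊆ V(G) is an ℓ-leaky forcing set if and only if B is an (ℓ−1)-leaky forcing set such that for every set L of ℓ−1 vertex leaks and every vertex v ∈ V(G) \ B, there exist two distinct vertices x ≠ y with x→v ∈ ℱ_L(B) and y→v ∈ ℱ_L(B). -/
/-!
Zero forcing with leaks (vertex leaks, edge leaks, specified leaks, mixed leaks).

A force `u → v` is modelled as the ordered pair `(u, v) : V × V`.  All the
leak notions are encoded by a set `P` of *prohibited* forces.
-/

variable {V : Type*}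

theorem exists_canForce (G : SimpleGraph V) (P : Set (V × V)) (B S : Set V) (hBS : B ⊆ S)
    (h : closureSet G P B = Set.univ) (hS : S ≠ Set.univ) : ∃ u v, CanForce G P S u v := by
  by_contra hc
  push Not at hc
  apply hS
  ext v
  simp only [Set.mem_univ, iff_true]
  have hv : Forced G P B v := by
    have : v ∈ closureSet G P B := by rw [h]; trivial
    exact this
  induction hv with
  | init hb => exact hBS hb
  | @force u v ha hp _ _ ihu ihw =>
    by_contra hvS
    exact hc u v ⟨ihu, hvS, ha, ihw, hp⟩

theorem exists_validList [Finite V] (G : SimpleGraph V) (P : Set (V × V)) (B : Set V)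
    (h : closureSet G P B = Set.univ) (n : ℕ) : ∀ S : Set V, B ⊆ S → Sᶜ.ncard = n →
    ∃ l, ValidList G P S l ∧ S ∪ Prod.snd '' {f | f ∈ l} = Set.univ := by
  induction n with
  | zero =>
    intro S _ hn
    rw [Set.ncard_eq_zero, Set.compl_empty_iff] at hn
    exact ⟨[], trivial, by simp [hn]⟩
  | succ n ih =>
    intro S hBS hn
    have hS : S ≠ Set.univ := by
      rintro rfl
      simp at hn
    obtain ⟨u, v, huv⟩ := exists_canForce G P B S hBS h hS
    have hcard : (insert v S)ᶜ.ncard = n := by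
      have h1 : (insert v S)ᶜ = Sᶜ \ {v} := by
        ext z; simp only [Set.mem_compl_iff, Set.mem_insert_iff, Set.mem_diff,
          Set.mem_singleton_iff]; tauto
      rw [h1, Set.ncard_diff_singleton_of_mem huv.2.1, hn]; rfl
    obtain ⟨l, hl, hu⟩ := ih (insert v S) (hBS.trans (Set.subset_insert _ _)) hcard
    refine ⟨(u, v) :: l, ⟨huv, hl⟩, ?_⟩
    rw [Set.eq_univ_iff_forall] at hu ⊢
    intro z
    have := hu z
    simp only [Set.mem_union, Set.mem_insert_iff, Set.mem_image, Set.mem_setOf_eq,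
      List.mem_cons] at this ⊢
    rcases this with (rfl | hz) | ⟨f, hf, rfl⟩
    · exact Or.inr ⟨(u, z), Or.inl rfl, rfl⟩
    · exact Or.inl hz
    · exact Or.inr ⟨f, Or.inr hf, rfl⟩

theorem exists_process [Finite V] (G : SimpleGraph V) (P : Set (V × V)) (B : Set V)
    (h : closureSet G P B = Set.univ) : ∃ l, ValidList G P B l ∧
      B ∪ Prod.snd '' {f | f ∈ l} = Set.univ :=
  exists_validList G P B h _ B subset_rfl rfl

theorem ValidList.mono {G : SimpleGraph V} {P Q : Set (V × V)} (hPQ : Q ⊆ P)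
    (l : List (V × V)) : ∀ S, ValidList G P S l → ValidList G Q S l := by
  induction l with
  | nil => intro S _; trivial
  | cons f l ih =>
    rintro S ⟨⟨h1, h2, h3, h4, h5⟩, h⟩
    exact ⟨⟨h1, h2, h3, h4, fun hq => h5 (hPQ hq)⟩, ih _ h⟩

theorem ValidList.not_mem {G : SimpleGraph V} {P : Set (V × V)} {f : V × V}
    (l : List (V × V)) : ∀ S, ValidList G P S l → f ∈ l → f.2 ∉ S ∧ (f.1, f.2) ∉ P := by
  induction l with
  | nil => intro S _ h; simp at h
  | cons g l ih =>
    rintro S ⟨⟨h1, h2, h3, h4, h5⟩, h⟩ hf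
    rcases List.mem_cons.1 hf with rfl | hf
    · exact ⟨h2, h5⟩
    · have := ih _ h hf
      exact ⟨fun hm => this.1 (Set.mem_insert_of_mem _ hm), this.2⟩

theorem ValidList.unique {G : SimpleGraph V} {P : Set (V × V)} {f g : V × V} (hfg : f.2 = g.2)
    (l : List (V × V)) : ∀ S, ValidList G P S l → f ∈ l → g ∈ l → f = g := by
  induction l with
  | nil => intro S _ h; simp at h
  | cons k l ih =>
    rintro S ⟨_, h⟩ hf hg
    rcases List.mem_cons.1 hf with rfl | hf1 <;> rcases List.mem_cons.1 hg with rfl | hg1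
    · rfl
    · exact absurd (by simp [hfg]) (ValidList.not_mem l _ h hg1).1
    · exact absurd (by simp [hfg]) (ValidList.not_mem l _ h hf1).1
    · exact ih _ h hf1 hg1

theorem ValidList.first_exit {G : SimpleGraph V} {P P' : Set (V × V)} {x : V} {C : Set V}
    (hP : ∀ a b, (a, b) ∈ P' → (a, b) ∉ P → a = x)
    (hC : ∀ u v, ¬ CanForce G P' C u v)
    (l : List (V × V)) : ∀ S, ValidList G P S l → S ⊆ C →
      S ∪ Prod.snd '' {f | f ∈ l} = Set.univ → C ≠ Set.univ →
      ∃ w, w ∉ C ∧ (x, w) ∈ l ∧ G.Adj x w ∧ ∀ z, G.Adj x z → z ≠ w → z ∈ C := by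
  induction l with
  | nil =>
    intro S _ hSC hu hne
    simp only [List.not_mem_nil, Set.setOf_false, Set.image_empty, Set.union_empty] at hu
    subst hu
    exact absurd (Set.univ_subset_iff.1 hSC) hne
  | cons k l ih =>
    rintro S ⟨⟨h1, h2, h3, h4, h5⟩, h⟩ hSC hu hne
    by_cases hk : k.2 ∈ C
    · obtain ⟨w, hw, hm, hr⟩ := ih _ h (Set.insert_subset hk hSC) (by
        rw [Set.eq_univ_iff_forall] at hu ⊢
        intro z
        rcases hu z with hz | ⟨f, hf, rfl⟩
        · exact Or.inl (Or.inr hz)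
        · rcases List.mem_cons.1 hf with rfl | hf
          · exact Or.inl (Or.inl rfl)
          · exact Or.inr ⟨f, hf, rfl⟩) hne
      exact ⟨w, hw, List.mem_cons_of_mem _ hm, hr⟩
    · have hx : k.1 = x := by
        apply hP _ k.2 _ h5
        by_contra hp
        exact hC k.1 k.2 ⟨hSC h1, hk, h3, fun w hw hne => hSC (h4 w hw hne), hp⟩
      subst hx
      exact ⟨k.2, hk, List.mem_cons_self, h3, fun z hz hne => hSC (h4 z hz hne)⟩

theorem exists_potential [Finite V] (G : SimpleGraph V) (P Q : Set (V × V)) (B : Set V)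
    (hPQ : Q ⊆ P) (h : closureSet G P B = Set.univ) (v : V) (hv : v ∉ B) :
    ∃ x, (x, v) ∈ potentialForces G Q B ∧ (x, v) ∉ P := by
  obtain ⟨l, hl, hu⟩ := exists_process G P B h
  rcases (Set.eq_univ_iff_forall.1 hu) v with hb | ⟨f, hf, rfl⟩
  · exact absurd hb hv
  · exact ⟨f.1, ⟨_, ⟨l, rfl, ValidList.mono hPQ l B hl, hu⟩, hf⟩, (ValidList.not_mem l B hl hf).2⟩

/-- Theorem `setofforces`: `B` is an `ℓ`-leaky forcing set iff
`B` is an `(ℓ-1)`-leaky forcing set such that for every set `L` of `ℓ-1` vertex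
leaks and every `v ∈ V(G) \ B` there are two distinct forces `x→v, y→v ∈ ℱ_L(B)`. -/
theorem statement2 [Fintype V] [DecidableEq V] (G : SimpleGraph V) (ℓ : ℕ)
    (hℓ : 1 ≤ ℓ) (B : Set V) :
    IsLeakyForcingSet G ℓ B ↔
      (IsLeakyForcingSet G (ℓ - 1) B ∧
        ∀ L : Finset V, L.card ≤ ℓ - 1 → ∀ v : V, v ∉ B →
          ∃ x y : V, x ≠ y ∧ (x, v) ∈ potentialForces G (vertexLeaks ↑L) B ∧
            (y, v) ∈ potentialForces G (vertexLeaks ↑L) B) := by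
  constructor
  · intro h
    refine ⟨fun L hL => h L (by omega), fun L hL v hv => ?_⟩
    obtain ⟨x, hx, -⟩ := exists_potential G _ _ B subset_rfl (h L (by omega)) v hv
    have hcard : (insert x L).card ≤ ℓ := (Finset.card_insert_le x L).trans (by omega)
    obtain ⟨y, hy, hy'⟩ := exists_potential G _ (vertexLeaks (↑L : Set V)) B
      (fun p hp => by
        have : p.1 ∈ (↑L : Set V) := hp
        simp only [vertexLeaks, Finset.coe_insert, Set.mem_setOf_eq]
        exact Or.inr this) (h (insert x L) hcard) v hv
    refine ⟨x, y, ?_, hx, hy⟩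
    rintro rfl
    exact hy' (by simp [vertexLeaks])
  · rintro ⟨h1, h2⟩ L' hL'
    by_contra hne
    rcases L'.eq_empty_or_nonempty with rfl | ⟨x, hx⟩
    · exact hne (h1 ∅ (by simp))
    set C := closureSet G (vertexLeaks (↑L' : Set V)) B with hCdef
    have hBC : B ⊆ C := fun b hb => Forced.init hb
    have hC : ∀ u v, ¬ CanForce G (vertexLeaks (↑L' : Set V)) C u v := by
      rintro u v ⟨a1, a2, a3, a4, a5⟩
      exact a2 (Forced.force a3 a5 a1 a4)
    have hcard : (L'.erase x).card ≤ ℓ - 1 := by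
      rw [Finset.card_erase_of_mem hx]; omega
    have hP : ∀ a b, (a, b) ∈ vertexLeaks (↑L' : Set V) →
        (a, b) ∉ vertexLeaks (↑(L'.erase x) : Set V) → a = x := by
      intro a b ha hb
      simp only [vertexLeaks, Set.mem_setOf_eq, Finset.mem_coe, Finset.mem_erase] at ha hb
      by_contra hax
      exact hb ⟨hax, ha⟩
    obtain ⟨l, hl, hu⟩ := exists_process G _ B (h1 _ hcard)
    obtain ⟨w, hw, -, hxw, hall⟩ := ValidList.first_exit hP hC l B hl hBC hu hne
    have key : ∀ y, (y, w) ∈ potentialForces G (vertexLeaks (↑(L'.erase x) : Set V)) B →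
        y = x := by
      rintro y ⟨F, ⟨m, rfl, hm, hmu⟩, hy⟩
      obtain ⟨w', hw', hmem, hxw', -⟩ := ValidList.first_exit hP hC m B hm hBC hmu hne
      have : w' = w := by
        by_contra hww
        exact hw' (hall w' hxw' hww)
      subst this
      exact congrArg Prod.fst (ValidList.unique (f := (y, w')) (g := (x, w')) rfl m B hm hy hmem)
    obtain ⟨y, z, hyz, hy, hz⟩ := h2 _ hcard w (fun hb => hw (hBC hb))
    exact hyz ((key y hy).trans (key z hz).symm)
end

section
/- Let G be a finite simple graph. A set B ⊆ V(G) is a 1-edge-leaky forcing set if and only if for every vertex v ∈ V(G) \ B there exist two distinct vertices x ≠ y with x→v ∈ ℱ(B) and y→v ∈ ℱ(B). -/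
/-!
Zero forcing with leaks (vertex leaks, edge leaks, specified leaks, mixed leaks).

A force `u → v` is modelled as the ordered pair `(u, v) : V × V`.  All the
leak notions are encoded by a set `P` of *prohibited* forces.
-/

variable {V : Type*}

theorem aux_escape (G : SimpleGraph V) (P P' : Set (V × V)) (C : Set V)
    (hC : ∀ u v, G.Adj u v → (u, v) ∉ P' → u ∈ C →
      (∀ w, G.Adj u w → w ≠ v → w ∈ C) → v ∈ C) :
    ∀ (l : List (V × V)) (S : Set V), S ⊆ C → ValidList G P S l →
      (∀ f ∈ l, f.2 ∈ C) ∨ ∃ f ∈ l, f.1 ∈ C ∧ f.2 ∉ C ∧ f ∈ P' := by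
  intro l
  induction l with
  | nil => intro S _ _; left; simp
  | cons f l ih =>
    intro S hS hv
    obtain ⟨⟨h1, h2, h3, h4, h5⟩, hl⟩ := hv
    by_cases hf : f.2 ∈ C
    · rcases ih (insert f.2 S) (Set.insert_subset hf hS) hl with h | ⟨g, hg, h⟩
      · left
        intro g hg
        rcases List.mem_cons.1 hg with rfl | hg
        · exact hf
        · exact h g hg
      · right
        exact ⟨g, List.mem_cons_of_mem _ hg, h⟩
    · right
      refine ⟨f, List.mem_cons_self, hS h1, hf, ?_⟩
      by_contra hP
      exact hf (hC f.1 f.2 h3 hP (hS h1) (fun w hw hne => hS (h4 w hw hne)))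

theorem aux_not_mem (G : SimpleGraph V) (P : Set (V × V)) :
    ∀ (l : List (V × V)) (S : Set V), ValidList G P S l → ∀ f ∈ l, f.2 ∉ S := by
  intro l
  induction l with
  | nil => intro S _ f hf; simp at hf
  | cons g l ih =>
    intro S hv f hf
    rcases List.mem_cons.1 hf with rfl | hf
    · exact hv.1.2.1
    · exact fun h => ih _ hv.2 f hf (Set.mem_insert_of_mem _ h)

theorem aux_unique (G : SimpleGraph V) (P : Set (V × V)) :
    ∀ (l : List (V × V)) (S : Set V), ValidList G P S l →
      ∀ f ∈ l, ∀ g ∈ l, f.2 = g.2 → f = g := by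
  intro l
  induction l with
  | nil => intro S _ f hf; simp at hf
  | cons k l ih =>
    intro S hv f hf g hg hfg
    rcases List.mem_cons.1 hf with rfl | hf2 <;> rcases List.mem_cons.1 hg with rfl | hg2
    · rfl
    · exact absurd (by rw [← hfg]; exact Set.mem_insert _ _) (aux_not_mem G P l _ hv.2 g hg2)
    · exact absurd (by rw [hfg]; exact Set.mem_insert _ _) (aux_not_mem G P l _ hv.2 f hf2)
    · exact ih _ hv.2 f hf2 g hg2 hfg

theorem aux_mono (G : SimpleGraph V) (P : Set (V × V)) :
    ∀ (l : List (V × V)) (S : Set V), ValidList G P S l →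
      ValidList G ∅ S l ∧ ∀ f ∈ l, f ∉ P := by
  intro l
  induction l with
  | nil => intro S _; exact ⟨trivial, by simp⟩
  | cons k l ih =>
    intro S hv
    obtain ⟨⟨h1, h2, h3, h4, h5⟩, hl⟩ := hv
    obtain ⟨i1, i2⟩ := ih _ hl
    refine ⟨⟨⟨h1, h2, h3, h4, by simp⟩, i1⟩, ?_⟩
    intro f hf
    rcases List.mem_cons.1 hf with rfl | hf
    · exact h5
    · exact i2 f hf

theorem aux_forced_subset (G : SimpleGraph V) (P : Set (V × V)) (S C : Set V) (hS : S ⊆ C)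
    (hC : ∀ u v, G.Adj u v → (u, v) ∉ P → u ∈ C →
      (∀ w, G.Adj u w → w ≠ v → w ∈ C) → v ∈ C) (v : V) (h : Forced G P S v) : v ∈ C := by
  induction h with
  | init h => exact hS h
  | force h1 h2 _ _ h5 h6 => exact hC _ _ h1 h2 h5 h6

theorem aux_closed (G : SimpleGraph V) (P : Set (V × V)) (B : Set V) :
    ∀ u v, G.Adj u v → (u, v) ∉ P → u ∈ closureSet G P B →
      (∀ w, G.Adj u w → w ≠ v → w ∈ closureSet G P B) → v ∈ closureSet G P B :=
  fun _ _ h1 h2 h3 h4 => Forced.force h1 h2 h3 h4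

theorem aux_exists [Finite V] (G : SimpleGraph V) (P : Set (V × V)) :
    ∀ (n : ℕ) (S : Set V), Sᶜ.ncard = n → closureSet G P S = Set.univ →
      ∃ l, ValidList G P S l ∧ ∀ v, v ∉ S → ∃ u, (u, v) ∈ l := by
  intro n
  induction n with
  | zero =>
    intro S hn _
    refine ⟨[], trivial, fun v hv => ?_⟩
    rw [Set.ncard_eq_zero] at hn
    have : v ∈ Sᶜ := hv
    simp [hn] at this
  | succ n ih =>
    intro S hn hcl
    have hex : ∃ u v, CanForce G P S u v := by
      by_contra hno
      have hne : Sᶜ.Nonempty := by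
        rw [← Set.ncard_pos]; omega
      obtain ⟨v, hv⟩ := hne
      refine hv (aux_forced_subset G P S S subset_rfl ?_ v
        (by have : v ∈ closureSet G P S := by simp [hcl]
            exact this))
      intro u w h1 h2 h3 h4
      by_contra h5
      exact hno ⟨u, w, h3, h5, h1, h4, h2⟩
    obtain ⟨u, v, huv⟩ := hex
    have hn' : (insert v S)ᶜ.ncard = n := by
      have : (insert v S)ᶜ = Sᶜ \ {v} := by
        ext x; simp [and_comm]
      rw [this, Set.ncard_sdiff_singleton_of_mem (show v ∈ Sᶜ from huv.2.1)]
      omega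
    have hcl' : closureSet G P (insert v S) = Set.univ := by
      rw [Set.eq_univ_iff_forall]
      intro x
      refine aux_forced_subset G P S _ ?_ (aux_closed G P _) x
        (by have : x ∈ closureSet G P S := by simp [hcl]
            exact this)
      exact fun y hy => Forced.init (Set.mem_insert_of_mem _ hy)
    obtain ⟨l, hl, hall⟩ := ih _ hn' hcl'
    refine ⟨(u, v) :: l, ⟨huv, hl⟩, fun w hw => ?_⟩
    by_cases hwv : w = v
    · subst hwv; exact ⟨u, List.mem_cons_self⟩
    · obtain ⟨x, hx⟩ := hall w (by simp [hwv, hw])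
      exact ⟨x, List.mem_cons_of_mem _ hx⟩

theorem aux_potential [Finite V] (G : SimpleGraph V) (P : Set (V × V)) (B : Set V)
    (h : closureSet G P B = Set.univ) (v : V) (hv : v ∉ B) :
    ∃ x, G.Adj x v ∧ (x, v) ∉ P ∧ (x, v) ∈ potentialForces G ∅ B := by
  obtain ⟨l, hl, hall⟩ := aux_exists G P _ B rfl h
  obtain ⟨h0, hP⟩ := aux_mono G P l B hl
  obtain ⟨x, hx⟩ := hall v hv
  refine ⟨x, ?_, hP _ hx, {f | f ∈ l}, ⟨l, rfl, h0, ?_⟩, hx⟩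
  · clear hall h0 hP h hv
    induction l generalizing B with
    | nil => simp at hx
    | cons k l ih =>
      rcases List.mem_cons.1 hx with rfl | hx
      · exact hl.1.2.2.1
      · exact ih _ hl.2 hx
  · rw [Set.eq_univ_iff_forall]
    intro w
    by_cases hw : w ∈ B
    · exact Or.inl hw
    · obtain ⟨u, hu⟩ := hall w hw
      exact Or.inr ⟨(u, w), hu, rfl⟩

/-- Theorem `edgedouble`: `B` is a `1`-edge-leaky forcing set
iff every `v ∈ V(G) \ B` admits two distinct forces `x→v, y→v ∈ ℱ(B)`. -/
theorem statement3 [Fintype V] [DecidableEq V] (G : SimpleGraph V) (B : Set V) :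
    IsEdgeLeakyForcingSet G 1 B ↔
      ∀ v : V, v ∉ B →
        ∃ x y : V, x ≠ y ∧ (x, v) ∈ potentialForces G ∅ B ∧
          (y, v) ∈ potentialForces G ∅ B := by
  constructor
  · intro h v hv
    obtain ⟨x, hx, -, hxF⟩ := aux_potential G _ B (h ∅ (by simp) (by simp)) v hv
    obtain ⟨y, -, hy, hyF⟩ :=
      aux_potential G _ B (h {s(x, v)} (by simpa using hx) (by simp)) v hv
    refine ⟨x, y, ?_, hxF, hyF⟩
    rintro rfl
    exact hy (by simp [edgeLeaksP])
  · intro h L hLG hL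
    by_contra hne
    set C := closureSet G (edgeLeaksP (↑L : Set (Sym2 V))) B with hCdef
    have hBC : B ⊆ C := fun v hv => Forced.init hv
    have key : ∀ l, ValidList G ∅ B l → B ∪ Prod.snd '' {f | f ∈ l} = Set.univ →
        ∃ f ∈ l, f.1 ∈ C ∧ f.2 ∉ C ∧ f ∈ edgeLeaksP (↑L : Set (Sym2 V)) := by
      intro l hl hu
      rcases aux_escape G ∅ _ C (aux_closed G _ B) l B hBC hl with h1 | h1
      · exfalso
        apply hne
        rw [Set.eq_univ_iff_forall]
        intro v
        have : v ∈ B ∪ Prod.snd '' {f | f ∈ l} := by rw [hu]; trivial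
        rcases this with hb | ⟨f, hf, rfl⟩
        · exact hBC hb
        · exact h1 f hf
      · exact h1
    obtain ⟨v, hv⟩ := (Set.ne_univ_iff_exists_notMem C).1 hne
    obtain ⟨x, -, -, ⟨F, ⟨l, rfl, hl, hu⟩, -⟩, -⟩ := h v (fun hb => hv (hBC hb))
    obtain ⟨⟨a, b⟩, -, ha, hb, hab⟩ := key l hl hu
    have every : ∀ z, (z, b) ∈ potentialForces G ∅ B → z = a := by
      rintro z ⟨F', ⟨l', rfl, hl', hu'⟩, hz⟩
      obtain ⟨⟨c, d⟩, hcd, hc, hd, hcdL⟩ := key l' hl' hu'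
      have heq : s(a, b) = s(c, d) := Finset.card_le_one.1 hL _ hab _ hcdL
      rcases Sym2.eq_iff.1 heq with ⟨rfl, rfl⟩ | ⟨rfl, rfl⟩
      · exact congrArg Prod.fst (aux_unique G ∅ l' B hl' _ hz _ hcd rfl)
      · exact absurd ha hd
    obtain ⟨x, y, hxy, hx, hy⟩ := h b (fun hb' => hb (hBC hb'))
    exact hxy ((every x hx).trans (every y hy).symm)
end

section
/- Let G be a finite simple graph, ℓ ≥ 1, and let B be an (ℓ−1)-edge-leaky forcing set of G. If L is a set of k ≥ ℓ edge leaks, then |L − B^[∞]_L| ≤ k − ℓ, where L − S = {xy ∈ L : x ∉ S and y ∉ S}; that is, at most k − ℓ of the leaked edges have both endpoints white after exhaustively applying the zero forcing rule with edge leaks L starting from B. -/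
/-!
Zero forcing with leaks (vertex leaks, edge leaks, specified leaks, mixed leaks).

A force `u → v` is modelled as the ordered pair `(u, v) : V × V`.  All the
leak notions are encoded by a set `P` of *prohibited* forces.
-/

variable {V : Type*}

/-- Lemma `edgefail`: if `B` is an `(ℓ-1)`-edge-leaky forcing
set and `L` is a set of `k ≥ ℓ` edge leaks, then `|L - B^[∞]_L| ≤ k - ℓ`, where
`L - S` is the set of edges of `L` with both endpoints outside `S`. -/
theorem statement4 [Fintype V] [DecidableEq V] (G : SimpleGraph V) (ℓ k : ℕ)
    (hℓ : 1 ≤ ℓ) (B : Set V) (hB : IsEdgeLeakyForcingSet G (ℓ - 1) B)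
    (L : Finset (Sym2 V)) (hLe : ↑L ⊆ G.edgeSet) (hcard : L.card = k) (hk : ℓ ≤ k) :
    {e ∈ (L : Set (Sym2 V)) |
        ∀ x ∈ e, x ∉ closureSet G (edgeLeaksP ↑L) B}.ncard ≤ k - ℓ := by
  classical
  set S := closureSet G (edgeLeaksP ↑L) B with hS
  let W : Finset (Sym2 V) := L.filter (fun e => ∀ x ∈ e, x ∉ S)
  have hW : {e ∈ (L : Set (Sym2 V)) | ∀ x ∈ e, x ∉ S} = (W : Set (Sym2 V)) := by
    ext e
    simp [W]
  rw [hW, Set.ncard_coe_finset]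
  by_contra hlt
  have hWL : W ⊆ L := Finset.filter_subset _ _
  have hM : (L \ W).card ≤ ℓ - 1 := by
    have h1 := Finset.card_sdiff_add_card_eq_card hWL
    omega
  have hsub : (↑(L \ W) : Set (Sym2 V)) ⊆ G.edgeSet := fun e he =>
    hLe (Finset.mem_coe.2 (Finset.mem_sdiff.1 (Finset.mem_coe.1 he)).1)
  have huniv := hB (L \ W) hsub hM
  have key : ∀ v, Forced G (edgeLeaksP ↑(L \ W)) B v → v ∈ S := by
    intro v hv
    induction hv with
    | init h => exact Forced.init h
    | @force u v hadj hP hu hw ihu ihw =>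
      refine Forced.force hadj ?_ ihu ihw
      intro hL
      apply hP
      have hL' : s(u, v) ∈ L := hL
      change s(u, v) ∈ (↑(L \ W) : Set (Sym2 V))
      rw [Finset.mem_coe, Finset.mem_sdiff]
      refine ⟨hL', fun hmem => ?_⟩
      exact (Finset.mem_filter.1 hmem).2 u (Sym2.mem_mk_left u v) ihu
  have hpos : 0 < W.card := by omega
  obtain ⟨e, he⟩ := Finset.card_pos.1 hpos
  have he2 := (Finset.mem_filter.1 he).2
  induction e with
  | _ x y =>
    refine he2 x (Sym2.mem_mk_left x y) (key x ?_)
    have hx : x ∈ closureSet G (edgeLeaksP ↑(L \ W)) B := by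
      rw [huniv]
      trivial
    exact hx
end

section
/- For any finite simple graph G and any ℓ ≥ 0, Z_(ℓ)(G) = Z'_(ℓ)(G); moreover, a set B ⊆ V(G) is an ℓ-leaky forcing set if and only if B is an ℓ-edge-leaky forcing set. -/
/-!
Zero forcing with leaks (vertex leaks, edge leaks, specified leaks, mixed leaks).

A force `u → v` is modelled as the ordered pair `(u, v) : V × V`.  All the
leak notions are encoded by a set `P` of *prohibited* forces.
-/

variable {V : Type*}

/-- `u` is blue, and `v` is its only white neighbor, with respect to the blue set `S`. -/
def UniqueWhite (G : SimpleGraph V) (S : Set V) (u v : V) : Prop :=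
  u ∈ S ∧ v ∉ S ∧ G.Adj u v ∧ ∀ w, G.Adj u w → w ≠ v → w ∈ S

theorem UniqueWhite.eq {G : SimpleGraph V} {S : Set V} {u v w : V}
    (h : UniqueWhite G S u v) (h' : UniqueWhite G S u w) : w = v := by
  by_contra hne
  exact h'.2.1 (h.2.2.2 w h'.2.2.1 hne)

theorem closureSet_subset {G : SimpleGraph V} {P : Set (V × V)} {B S : Set V} (hB : B ⊆ S)
    (h : ∀ u v, UniqueWhite G S u v → (u, v) ∈ P) : closureSet G P B ⊆ S := by
  intro v hv
  change Forced G P B v at hv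
  induction hv with
  | init hv => exact hB hv
  | @force u v hadj hP _ _ ihu ihw =>
    by_contra hvS
    exact hP (h u v ⟨ihu, hvS, hadj, ihw⟩)

theorem closureSet_stalled {G : SimpleGraph V} {P : Set (V × V)} {B : Set V} {u v : V}
    (h : UniqueWhite G (closureSet G P B) u v) : (u, v) ∈ P := by
  by_contra hP
  exact h.2.1 (Forced.force h.2.2.1 hP h.1 h.2.2.2)

theorem leaky_iff_edgeLeaky [Fintype V] [DecidableEq V] (G : SimpleGraph V) (ℓ : ℕ) (B : Set V) :
    IsLeakyForcingSet G ℓ B ↔ IsEdgeLeakyForcingSet G ℓ B := by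
  classical
  -- for every blue set `S`, choose the unique white neighbor where it exists
  have key : ∀ S : Set V, ∃ f : V → V, ∀ u v, UniqueWhite G S u v → f u = v := by
    intro S
    have : ∀ u, ∃ x, ∀ v, UniqueWhite G S u v → x = v := by
      intro u
      by_cases hu : ∃ v, UniqueWhite G S u v
      · obtain ⟨x, hx⟩ := hu
        exact ⟨x, fun v hv => hv.eq hx⟩
      · exact ⟨u, fun v hv => (hu ⟨v, hv⟩).elim⟩
    choose f hf using this
    exact ⟨f, hf⟩
  constructor
  · intro H L _ hcard
    obtain ⟨f, hf⟩ := key (closureSet G (edgeLeaksP ↑L) B)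
    set S := closureSet G (edgeLeaksP ↑L) B with hS
    let A : Finset V := Finset.univ.filter fun u => ∃ v, UniqueWhite G S u v
    have hA : A.card ≤ L.card := by
      apply Finset.card_le_card_of_injOn (fun u => s(u, f u))
      · intro u hu
        obtain ⟨v, hv⟩ := (Finset.mem_filter.1 hu).2
        have := closureSet_stalled hv
        rw [← hf u v hv] at this
        exact this
      · intro u hu u' hu' heq
        obtain ⟨v, hv⟩ := (Finset.mem_filter.1 hu).2
        obtain ⟨v', hv'⟩ := (Finset.mem_filter.1 hu').2
        simp only [hf u v hv, hf u' v' hv', Sym2.eq_iff] at heq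
        rcases heq with ⟨h, _⟩ | ⟨h, _⟩
        · exact h
        · exact (hv'.2.1 (h ▸ hv.1)).elim
    have hA' := H A (hA.trans hcard)
    rw [Set.eq_univ_iff_forall] at hA' ⊢
    intro x
    refine closureSet_subset (S := S) (fun v hv => Forced.init hv) ?_ (hA' x)
    intro u v huv
    change u ∈ (A : Set V)
    exact Finset.mem_coe.2 (Finset.mem_filter.2 ⟨Finset.mem_univ _, v, huv⟩)
  · intro H L hcard
    obtain ⟨f, hf⟩ := key (closureSet G (vertexLeaks ↑L) B)
    set S := closureSet G (vertexLeaks ↑L) B with hS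
    let A : Finset V := Finset.univ.filter fun u => ∃ v, UniqueWhite G S u v
    have hA : A ⊆ L := by
      intro u hu
      obtain ⟨v, hv⟩ := (Finset.mem_filter.1 hu).2
      exact closureSet_stalled hv
    have hE := H (A.image fun u => s(u, f u)) ?_
      (Finset.card_image_le.trans ((Finset.card_le_card hA).trans hcard))
    · rw [Set.eq_univ_iff_forall] at hE ⊢
      intro x
      refine closureSet_subset (S := S) (fun v hv => Forced.init hv) ?_ (hE x)
      intro u v huv
      change s(u, v) ∈ ((A.image fun u => s(u, f u) : Finset (Sym2 V)) : Set (Sym2 V))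
      refine Finset.mem_coe.2 (Finset.mem_image.2 ⟨u, ?_, ?_⟩)
      · exact Finset.mem_filter.2 ⟨Finset.mem_univ _, v, huv⟩
      · rw [hf u v huv]
    · intro e he
      obtain ⟨u, hu, rfl⟩ := Finset.mem_image.1 (Finset.mem_coe.1 he)
      obtain ⟨v, hv⟩ := (Finset.mem_filter.1 hu).2
      rw [hf u v hv]
      exact hv.2.2.1

/-- Corollary `edgefund`: `Z_(ℓ)(G) = Z'_(ℓ)(G)`, and `B` is
an `ℓ`-leaky forcing set iff `B` is an `ℓ`-edge-leaky forcing set. -/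
theorem statement6 [Fintype V] [DecidableEq V] (G : SimpleGraph V) (ℓ : ℕ) :
    Zleaky G ℓ = ZedgeLeaky G ℓ ∧
      ∀ B : Set V, IsLeakyForcingSet G ℓ B ↔ IsEdgeLeakyForcingSet G ℓ B := by
  refine ⟨?_, leaky_iff_edgeLeaky G ℓ⟩
  simp only [Zleaky, ZedgeLeaky, leaky_iff_edgeLeaky]
end

section
/- For any finite simple graph G and any ℓ ≥ 0, Z^s_(ℓ)(G) = Z_(ℓ)(G); moreover, a set B ⊆ V(G) is an ℓ-leaky forcing set if and only if B is a specified ℓ-leaky forcing set. -/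
/-!
Zero forcing with leaks (vertex leaks, edge leaks, specified leaks, mixed leaks).

A force `u → v` is modelled as the ordered pair `(u, v) : V × V`.  All the
leak notions are encoded by a set `P` of *prohibited* forces.
-/

variable {V : Type*}

theorem forced_anti {G : SimpleGraph V} {P Q : Set (V × V)} (h : P ⊆ Q) {B : Set V} {v : V}
    (hv : Forced G Q B v) : Forced G P B v := by
  induction hv with
  | init hb => exact Forced.init hb
  | force ha hp _ _ ih1 ih2 => exact Forced.force ha (fun hh => hp (h hh)) ih1 ih2

theorem leaky_iff_spec [Fintype V] [DecidableEq V] (G : SimpleGraph V) (ℓ : ℕ) (B : Set V) :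
    IsLeakyForcingSet G ℓ B ↔ IsSpecifiedLeakyForcingSet G ℓ B := by
  classical
  constructor
  · intro h L _ hc
    have h1 := h (L.image Prod.fst) (Finset.card_image_le.trans hc)
    rw [Set.eq_univ_iff_forall] at h1 ⊢
    intro v
    refine forced_anti ?_ (h1 v)
    intro p hp
    exact Finset.mem_coe.2 (Finset.mem_image_of_mem _ hp)
  · intro h T hT
    -- leak exactly the stalled forces of the vertex leaks
    let C : Set V := closureSet G (vertexLeaks (T : Set V)) B
    let L : Finset (V × V) := Finset.univ.filter fun p =>
      p.1 ∈ T ∧ G.Adj p.1 p.2 ∧ p.2 ∉ C ∧ ∀ w, G.Adj p.1 w → w ≠ p.2 → w ∈ C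
    have hL : ∀ p, p ∈ L ↔
        p.1 ∈ T ∧ G.Adj p.1 p.2 ∧ p.2 ∉ C ∧ ∀ w, G.Adj p.1 w → w ≠ p.2 → w ∈ C := by
      intro p
      simp [L]
    have hcard : L.card ≤ T.card := by
      apply Finset.card_le_card_of_injOn Prod.fst
      · intro p hp
        exact ((hL p).1 hp).1
      · rintro ⟨a, b⟩ hp ⟨a', c⟩ hq haa
        obtain ⟨_, _, _, h3⟩ := (hL _).1 hp
        obtain ⟨_, h5, h6, _⟩ := (hL _).1 hq
        simp only at haa h3 h5 h6
        subst haa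
        by_contra hne
        exact h6 (h3 c h5 (fun hcb => hne (by rw [hcb])))
    have h1 := h L (fun p hp => ((hL p).1 hp).2.1) (hcard.trans hT)
    rw [Set.eq_univ_iff_forall] at h1 ⊢
    intro v
    have hv : Forced G (↑L) B v := h1 v
    show v ∈ C
    induction hv with
    | init hb => exact Forced.init hb
    | @force u v ha hp _ _ ih1 ih2 =>
      by_contra hvC
      by_cases hu : u ∈ T
      · exact hp (Finset.mem_coe.2 ((hL _).2 ⟨hu, ha, hvC, ih2⟩))
      · exact hvC (Forced.force ha (fun hh => hu hh) ih1 ih2)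

/-- Corollary `specfund`: `Z^s_(ℓ)(G) = Z_(ℓ)(G)`, and `B` is
an `ℓ`-leaky forcing set iff `B` is a specified `ℓ`-leaky forcing set. -/
theorem statement8 [Fintype V] [DecidableEq V] (G : SimpleGraph V) (ℓ : ℕ) :
    Zspec G ℓ = Zleaky G ℓ ∧
      ∀ B : Set V, IsLeakyForcingSet G ℓ B ↔ IsSpecifiedLeakyForcingSet G ℓ B := by
  exact ⟨by simp only [Zspec, Zleaky, leaky_iff_spec], fun B => leaky_iff_spec G ℓ B⟩
end

section
/- Let G be a finite simple graph, ℓ ≥ 1, and let B be an (ℓ−1)-leaky forcing set of G. If L is a set of k ≥ ℓ specified leaks, then |L − B^[∞]_L| ≤ k − ℓ, where L − S = {x→y ∈ L : x ∉ S}; that is, at most k − ℓ of the specified leaks have a white tail after exhaustively applying the zero forcing rule with specified leaks L starting from B. -/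
/-!
Zero forcing with leaks (vertex leaks, edge leaks, specified leaks, mixed leaks).

A force `u → v` is modelled as the ordered pair `(u, v) : V × V`.  All the
leak notions are encoded by a set `P` of *prohibited* forces.
-/

variable {V : Type*}

/-- Proposition `specfail`: if `B` is an `(ℓ-1)`-leaky forcing
set and `L` is a set of `k ≥ ℓ` specified leaks, then `|L - B^[∞]_L| ≤ k - ℓ`,
where `L - S = {x→y ∈ L : x ∉ S}`. -/
theorem statement9 [Fintype V] [DecidableEq V] (G : SimpleGraph V) (ℓ k : ℕ)
    (hℓ : 1 ≤ ℓ) (B : Set V) (hB : IsLeakyForcingSet G (ℓ - 1) B)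
    (L : Finset (V × V)) (hadj : ∀ p ∈ L, G.Adj p.1 p.2)
    (hcard : L.card = k) (hk : ℓ ≤ k) :
    {p ∈ (L : Set (V × V)) |
        p.1 ∉ closureSet G (↑L) B}.ncard ≤ k - ℓ := by
  classical
  have h1 : {p ∈ (L : Set (V × V)) | p.1 ∉ closureSet G (↑L) B}
      = ((L.filter (fun p => p.1 ∉ closureSet G (↑L) B) : Finset (V × V)) : Set (V × V)) := by
    ext p; simp
  rw [h1, Set.ncard_coe_finset]
  have hsum := Finset.card_filter_add_card_filter_not (s := L)
    (fun p : V × V => p.1 ∈ closureSet G (↑L) B)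
  by_contra hcon
  have hA : (L.filter (fun p => p.1 ∈ closureSet G (↑L) B)).card ≤ ℓ - 1 := by omega
  have hT := hB ((L.filter (fun p => p.1 ∈ closureSet G (↑L) B)).image Prod.fst)
    (Finset.card_image_le.trans hA)
  have key : ∀ v, Forced G (↑L) B v := by
    intro v
    have hv : v ∈ closureSet G (vertexLeaks
        ↑((L.filter (fun p => p.1 ∈ closureSet G (↑L) B)).image Prod.fst)) B := by
      rw [hT]; trivial
    change Forced _ _ _ _ at hv
    induction hv with
    | init h => exact Forced.init h
    | @force u v huv hn _ _ ih1 ih2 =>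
      refine Forced.force huv (fun hL => hn ?_) ih1 ih2
      exact Finset.mem_coe.2 (Finset.mem_image.2
        ⟨(u, v), Finset.mem_filter.2 ⟨hL, ih1⟩, rfl⟩)
  have hall : L.filter (fun p => p.1 ∈ closureSet G (↑L) B) = L :=
    Finset.filter_true_of_mem (fun p _ => key p.1)
  rw [hall] at hA
  omega
end

section
/- Let G be a finite simple graph, ℓ ≥ 1, and let B be a mixed (ℓ−1)-leaky forcing set of G. Let L = L₁ ∪ L₂ ∪ L₃ be a set of k ≥ ℓ leaks, where L₁ is a set of vertex leaks, L₂ a set of edge leaks, and L₃ a set of specified leaks. Then |L₁ \ B^[∞]_L| + |L₂ − B^[∞]_L| + |L₃ − B^[∞]_L| ≤ k − ℓ, where for S ⊆ V(G), L₂ − S = {xy ∈ L₂ : x ∉ S and y ∉ S} and L₃ − S = {x→y ∈ L₃ : x ∉ S}. -/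
/-!
Zero forcing with leaks (vertex leaks, edge leaks, specified leaks, mixed leaks).

A force `u → v` is modelled as the ordered pair `(u, v) : V × V`.  All the
leak notions are encoded by a set `P` of *prohibited* forces.
-/

variable {V : Type*}

/-- Lemma `mixfail`: if `B` is a mixed `(ℓ-1)`-leaky forcing
set and `L = L₁ ∪ L₂ ∪ L₃` is a set of `k ≥ ℓ` leaks (`L₁` vertex leaks, `L₂`
edge leaks, `L₃` specified leaks), then
`|L₁ \ B^[∞]_L| + |L₂ - B^[∞]_L| + |L₃ - B^[∞]_L| ≤ k - ℓ`. -/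
theorem statement10 [Fintype V] [DecidableEq V] (G : SimpleGraph V) (ℓ k : ℕ)
    (hℓ : 1 ≤ ℓ) (B : Set V) (hB : IsMixedLeakyForcingSet G (ℓ - 1) B)
    (L₁ : Finset V) (L₂ : Finset (Sym2 V)) (L₃ : Finset (V × V))
    (hL₂ : ↑L₂ ⊆ G.edgeSet) (hL₃ : ∀ p ∈ L₃, G.Adj p.1 p.2)
    (hcard : L₁.card + L₂.card + L₃.card = k) (hk : ℓ ≤ k)
    (C : Set V)
    (hC : C = closureSet G (vertexLeaks ↑L₁ ∪ edgeLeaksP ↑L₂ ∪ (↑L₃ : Set (V × V))) B) :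
    ((L₁ : Set V) \ C).ncard +
        {e ∈ (L₂ : Set (Sym2 V)) | ∀ x ∈ e, x ∉ C}.ncard +
        {p ∈ (L₃ : Set (V × V)) | p.1 ∉ C}.ncard ≤ k - ℓ := by
  classical
  by_contra hcon
  push Not at hcon
  have e1 : ((L₁ : Set V) \ C).ncard = (L₁.filter (fun x => ¬ x ∈ C)).card := by
    rw [← Set.ncard_coe_finset]; congr 1; ext x; simp
  have e2 : {e ∈ (L₂ : Set (Sym2 V)) | ∀ x ∈ e, x ∉ C}.ncard
      = (L₂.filter (fun e => ¬ ∃ x ∈ e, x ∈ C)).card := by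
    rw [← Set.ncard_coe_finset]; congr 1; ext x; simp
  have e3 : {p ∈ (L₃ : Set (V × V)) | p.1 ∉ C}.ncard
      = (L₃.filter (fun p => ¬ p.1 ∈ C)).card := by
    rw [← Set.ncard_coe_finset]; congr 1; ext x; simp
  have f1 := Finset.card_filter_add_card_filter_not (s := L₁) (fun x => x ∈ C)
  have f2 := Finset.card_filter_add_card_filter_not (s := L₂) (fun e => ∃ x ∈ e, x ∈ C)
  have f3 := Finset.card_filter_add_card_filter_not (s := L₃) (fun p => p.1 ∈ C)
  have hM := hB (L₁.filter (fun x => x ∈ C)) (L₂.filter (fun e => ∃ x ∈ e, x ∈ C))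
    (L₃.filter (fun p => p.1 ∈ C))
    (fun e he => hL₂ (by simpa using (Finset.mem_filter.mp he).1))
    (fun p hp => hL₃ p (Finset.mem_filter.mp hp).1) (by omega)
  have key : ∀ v, v ∈ C := by
    intro v
    have hv := hM.symm ▸ Set.mem_univ v
    change Forced _ _ _ _ at hv
    induction hv with
    | init h => rw [hC]; exact Forced.init h
    | @force u v hadj hnP _ _ ihu ihw =>
      have ihu' := ihu
      rw [hC] at ihu ⊢
      refine Forced.force hadj ?_ ihu (fun w h1 h2 => ?_)
      · intro hP
        apply hnP
        rcases hP with (h | h) | h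
        · exact Or.inl (Or.inl (by
            simp only [vertexLeaks, Set.mem_setOf_eq, Finset.mem_coe, Finset.mem_filter] at h ⊢
            exact ⟨h, ihu'⟩))
        · exact Or.inl (Or.inr (by
            simp only [edgeLeaksP, Set.mem_setOf_eq, Finset.mem_coe, Finset.mem_filter] at h ⊢
            exact ⟨h, u, by simp, ihu'⟩))
        · exact Or.inr (by
            simp only [Finset.mem_coe, Finset.mem_filter] at h ⊢
            exact ⟨h, ihu'⟩)
      · have := ihw w h1 h2
        rw [hC] at this
        exact this
  have z1 : L₁.filter (fun x => ¬ x ∈ C) = ∅ := by simp [key]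
  have z2 : L₂.filter (fun e => ¬ ∃ x ∈ e, x ∈ C) = ∅ := by
    rw [Finset.filter_eq_empty_iff]
    intro e _ h
    induction e with
    | _ a b => exact h ⟨a, by simp, key a⟩
  have z3 : L₃.filter (fun p => ¬ p.1 ∈ C) = ∅ := by simp [key]
  rw [e1, e2, e3, z1, z2, z3] at hcon
  simp at hcon
end

section
/- For any finite simple graph G and any ℓ ≥ 0, Z_(ℓ)(G) = Z^m_(ℓ)(G); moreover, a set B ⊆ V(G) is an ℓ-leaky forcing set if and only if B is a mixed ℓ-leaky forcing set. -/
/-!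
Zero forcing with leaks (vertex leaks, edge leaks, specified leaks, mixed leaks).

A force `u → v` is modelled as the ordered pair `(u, v) : V × V`.  All the
leak notions are encoded by a set `P` of *prohibited* forces.
-/

variable {V : Type*}

/-- A vertex leaky forcing set withstands mixed leaks: each edge leak is replaced by a
vertex leak at the endpoint that is blue in the final coloring. -/
theorem mixed_of_leaky [DecidableEq V] (G : SimpleGraph V) (ℓ : ℕ) (B : Set V)
    (h : IsLeakyForcingSet G ℓ B) : IsMixedLeakyForcingSet G ℓ B := by
  intro L₁ L₂ L₃ _ _ hc
  set P := vertexLeaks (↑L₁ : Set V) ∪ edgeLeaksP ↑L₂ ∪ (↑L₃ : Set (V × V)) with hP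
  have hf : ∀ e : Sym2 V, ∃ a : V, ∀ u v, e = s(u, v) → Forced G P B u →
      ¬ Forced G P B v → a = u := by
    intro e
    induction e using Sym2.ind with
    | _ x y =>
      by_cases hx : Forced G P B x
      · refine ⟨x, fun u v he hu hv => ?_⟩
        rcases Sym2.eq_iff.1 he with ⟨rfl, rfl⟩ | ⟨rfl, rfl⟩
        · rfl
        · exact absurd hx hv
      · refine ⟨y, fun u v he hu hv => ?_⟩
        rcases Sym2.eq_iff.1 he with ⟨rfl, rfl⟩ | ⟨rfl, rfl⟩
        · exact absurd hu hx
        · rfl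
  choose f hf using hf
  have hcard : (L₁ ∪ L₂.image f ∪ L₃.image Prod.fst).card ≤ ℓ := by
    have h1 := Finset.card_union_le (L₁ ∪ L₂.image f) (L₃.image Prod.fst)
    have h2 := Finset.card_union_le L₁ (L₂.image f)
    have h3 := Finset.card_image_le (s := L₂) (f := f)
    have h4 := Finset.card_image_le (s := L₃) (f := Prod.fst)
    omega
  have key := h _ hcard
  refine Set.eq_univ_of_forall fun v => ?_
  have hv : Forced G (vertexLeaks ↑(L₁ ∪ L₂.image f ∪ L₃.image Prod.fst)) B v := by
    have : v ∈ closureSet G (vertexLeaks ↑(L₁ ∪ L₂.image f ∪ L₃.image Prod.fst)) B := by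
      rw [key]; trivial
    exact this
  change Forced G P B v
  induction hv with
  | init hb => exact Forced.init hb
  | @force u v hadj hnot _ _ ihu ihw =>
    by_contra hv
    refine hv (Forced.force hadj (fun hp => hnot ?_) ihu ihw)
    change u ∈ (↑(L₁ ∪ L₂.image f ∪ L₃.image Prod.fst) : Set V)
    rw [Finset.mem_coe, Finset.mem_union, Finset.mem_union]
    rcases hp with (hp | hp) | hp
    · exact Or.inl (Or.inl hp)
    · exact Or.inl (Or.inr (Finset.mem_image.2 ⟨s(u, v), hp, hf _ u v rfl ihu hv⟩))
    · exact Or.inr (Finset.mem_image.2 ⟨(u, v), hp, rfl⟩)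

theorem leaky_of_mixed (G : SimpleGraph V) (ℓ : ℕ) (B : Set V)
    (h : IsMixedLeakyForcingSet G ℓ B) : IsLeakyForcingSet G ℓ B := by
  intro L hL
  have := h L ∅ ∅ (by simp) (by simp) (by simpa using hL)
  simpa [edgeLeaksP] using this

/-- `Z_(ℓ)(G) = Z^m_(ℓ)(G)`, and `B` is an `ℓ`-leaky forcing
set iff `B` is a mixed `ℓ`-leaky forcing set. -/
theorem statement12 [Fintype V] [DecidableEq V] (G : SimpleGraph V) (ℓ : ℕ) :
    Zleaky G ℓ = Zmixed G ℓ ∧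
      ∀ B : Set V, IsLeakyForcingSet G ℓ B ↔ IsMixedLeakyForcingSet G ℓ B := by
  have key : ∀ B : Set V, IsLeakyForcingSet G ℓ B ↔ IsMixedLeakyForcingSet G ℓ B :=
    fun B => ⟨mixed_of_leaky G ℓ B, leaky_of_mixed G ℓ B⟩
  refine ⟨?_, key⟩
  simp only [Zleaky, Zmixed, key]
end

section
/- Let G be a finite simple graph, let L be a set of specified leaks on V(G), and let ℓ = I(L) be the maximum size of an independent subset of L. Then every specified ℓ-leaky forcing set B of G is an L-leaky forcing set of G; in particular Z_L(G) ≤ Z^s_(ℓ)(G). -/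
/-!
Zero forcing with leaks (vertex leaks, edge leaks, specified leaks, mixed leaks).

A force `u → v` is modelled as the ordered pair `(u, v) : V × V`.  All the
leak notions are encoded by a set `P` of *prohibited* forces.
-/

variable {V : Type*}

/-- Theorem `ind`: if `L` is a set of specified leaks on
`V(G)` and `ℓ = I(L)`, then every specified `ℓ`-leaky forcing set is an
`L`-leaky forcing set; in particular `Z_L(G) ≤ Z^s_(ℓ)(G)`. -/
theorem statement13 [Fintype V] [DecidableEq V] (G : SimpleGraph V)
    (L : Finset (V × V)) (ℓ : ℕ) (hℓ : ℓ = maxIndepLeaks L) :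
    (∀ B : Set V, IsSpecifiedLeakyForcingSet G ℓ B → IsLLeakyForcingSet G (↑L) B) ∧
      ZLleaky G (↑L) ≤ Zspec G ℓ := by
  classical
  have main : ∀ B : Set V, IsSpecifiedLeakyForcingSet G ℓ B → IsLLeakyForcingSet G (↑L) B := by
    rintro B hB L' ⟨L₂, hL₂, φ, hφ⟩
    set C : Set V := closureSet G L' B with hC
    let M : Finset (V × V) := Finset.univ.filter fun p =>
      p.1 ∈ C ∧ p.2 ∉ C ∧ G.Adj p.1 p.2 ∧ ∀ w, G.Adj p.1 w → w ≠ p.2 → w ∈ C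
    have hM : ∀ p, p ∈ M ↔ (p.1 ∈ C ∧ p.2 ∉ C ∧ G.Adj p.1 p.2 ∧
        ∀ w, G.Adj p.1 w → w ≠ p.2 → w ∈ C) := by
      intro p; simp [M]
    have hML : ∀ p ∈ M, p ∈ L' := by
      rintro ⟨u, v⟩ hp
      obtain ⟨h1, h2, h3, h4⟩ := (hM _).1 hp
      by_contra hn
      exact h2 (Forced.force h3 hn h1 h4)
    have hinj : Function.Injective (fun p : V × V => (φ p.1, φ p.2)) := by
      rintro ⟨a, b⟩ ⟨c, d⟩ h
      simpa using h
    have hcard : M.card ≤ ℓ := by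
      rw [hℓ]
      apply le_csSup
      · refine ⟨L.card, ?_⟩
        rintro n ⟨N, hN, -, rfl⟩
        exact Finset.card_le_card hN
      · refine ⟨M.image (fun p => (φ p.1, φ p.2)), ?_, ⟨?_, ?_⟩,
          Finset.card_image_of_injective _ hinj⟩
        · intro q hq
          obtain ⟨p, hp, rfl⟩ := Finset.mem_image.1 hq
          exact_mod_cast hL₂ ((hφ p.1 p.2).1 (hML p hp))
        · apply Finset.card_image_of_injOn
          intro q hq q' hq' h
          obtain ⟨p, hp, rfl⟩ := Finset.mem_image.1 (Finset.mem_coe.1 hq)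
          obtain ⟨p', hp', rfl⟩ := Finset.mem_image.1 (Finset.mem_coe.1 hq')
          have h1 : p.1 = p'.1 := φ.injective h
          obtain ⟨-, -, -, a4⟩ := (hM _).1 hp
          obtain ⟨-, b2, b3, -⟩ := (hM _).1 hp'
          have h2 : p'.2 = p.2 := by
            by_contra hne
            exact b2 (a4 _ (h1 ▸ b3) hne)
          simp [h1, h2]
        · rw [Finset.disjoint_left]
          intro x hx hx'
          simp only [Finset.mem_image] at hx hx'
          obtain ⟨_, ⟨p, hp, rfl⟩, rfl⟩ := hx
          obtain ⟨_, ⟨q, hq, rfl⟩, h⟩ := hx'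
          have h1 : q.2 = p.1 := φ.injective h
          exact ((hM _).1 hq).2.1 (h1 ▸ ((hM _).1 hp).1)
    have huniv := hB M (fun p hp => ((hM p).1 hp).2.2.1) hcard
    rw [Set.eq_univ_iff_forall] at huniv ⊢
    intro v
    have hv : Forced G (↑M) B v := huniv v
    induction hv with
    | init h => exact Forced.init h
    | @force u v hadj hnp _ _ ihu ihw =>
      by_contra hvC
      exact hnp (Finset.mem_coe.2 ((hM (u, v)).2 ⟨ihu, hvC, hadj, ihw⟩))
  refine ⟨main, ?_⟩
  have hne : {n | ∃ B : Finset V, B.card = n ∧ IsSpecifiedLeakyForcingSet G ℓ ↑B}.Nonempty := by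
    refine ⟨_, Finset.univ, rfl, fun M _ _ => ?_⟩
    rw [Set.eq_univ_iff_forall]
    exact fun v => Forced.init (by simp)
  obtain ⟨B, hBc, hB⟩ := Nat.sInf_mem hne
  exact Nat.sInf_le ⟨B, hBc, main _ hB⟩
end
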